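/- Two finite groups G_1 and G_2 are both almost monomial if and only if their direct product G_1 × G_2 is almost monomial. -/

import Mathlib

open scoped Classical

noncomputable section

/-- The inner product of two class functions on a finite group. -/
def cdot (G : Type*) [Group G] [Finite G] (f h : G → ℂ) : ℂ :=
  (Nat.card G : ℂ)⁻¹ * ∑ᶠ g : G, f g * (starRingEnd ℂ) (h g)

/-- `f` is the character of a finite-dimensional complex representation of `G`. -/
def IsChar (G : Type*) [Group G] (f : G → ℂ) : Prop :=
  ∃ (n : ℕ) (ρ : G →* Matrix.GeneralLinearGroup (Fin n) ℂ),
    f = fun g => Matrix.trace ((ρ g : Matrix (Fin n) (Fin n) ℂ))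

/-- `f` is a linear (degree one) character of `G`. -/
def IsLinearChar (G : Type*) [Group G] (f : G → ℂ) : Prop :=
  ∃ ρ : G →* ℂˣ, f = fun g => (ρ g : ℂ)

/-- `f` is an irreducible character of `G`: a character of norm one. -/
def IsIrrChar (G : Type*) [Group G] [Finite G] (f : G → ℂ) : Prop :=
  IsChar G f ∧ cdot G f f = 1

/-- The class function on `G` induced from a class function on a subgroup `H`. -/
def ind {G : Type*} [Group G] [Finite G] (H : Subgroup G) (f : H → ℂ) : G → ℂ :=
  fun g => (Nat.card H : ℂ)⁻¹ *
    ∑ᶠ x : G, if h : x * g * x⁻¹ ∈ H then f ⟨x * g * x⁻¹, h⟩ else 0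

/-- Restriction of a class function on `G` to a subgroup `H`. -/
def res {G : Type*} [Group G] (H : Subgroup G) (f : G → ℂ) : H → ℂ := fun x => f x

/-- Restriction of a class function on a subgroup `K` to a smaller subgroup `H ≤ K`. -/
def resTo {G : Type*} [Group G] {K H : Subgroup G} (hHK : H ≤ K) (f : K → ℂ) : H → ℂ :=
  fun x => f ⟨x.1, hHK x.2⟩

/-- Induction of a class function from a subgroup `H` to a larger subgroup `K`. -/
def indTo {G : Type*} [Group G] [Finite G] (K H : Subgroup G) (f : H → ℂ) : K → ℂ :=
  ind (H.subgroupOf K) fun y => f ⟨y.1.1, Subgroup.mem_subgroupOf.mp y.2⟩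

/-- `G` is almost monomial. -/
def IsAlmostMonomial (G : Type*) [Group G] [Finite G] : Prop :=
  ∀ χ φ : G → ℂ, IsIrrChar G χ → IsIrrChar G φ → χ ≠ φ →
    ∃ (H : Subgroup G) (l : H → ℂ), IsLinearChar H l ∧
      cdot G (ind H l) χ ≠ 0 ∧ cdot G (ind H l) φ = 0

/-- `G` is relative almost monomial with respect to the (normal) subgroup `N`. -/
def IsRelAlmostMonomial (G : Type*) [Group G] [Finite G] (N : Subgroup G) : Prop :=
  ∀ χ φ : G → ℂ, IsIrrChar G χ → IsIrrChar G φ → χ ≠ φ →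
    ∃ (H : Subgroup G) (hNH : N ≤ H) (ψ : H → ℂ), IsIrrChar H ψ ∧
      IsIrrChar N (resTo hNH ψ) ∧
      cdot G (ind H ψ) χ ≠ 0 ∧ cdot G (ind H ψ) φ = 0

/-- `H` is a subnormal subgroup of `G`. -/
def IsSubnormalSubgroup (G : Type*) [Group G] (H : Subgroup G) : Prop :=
  ∃ (n : ℕ) (c : Fin (n + 1) → Subgroup G), c 0 = H ∧ c (Fin.last n) = ⊤ ∧
    ∀ i : Fin n, ((c i.castSucc).subgroupOf (c i.succ)).Normal

/-- `G` is normally almost monomial. -/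
def IsNormallyAlmostMonomial (G : Type*) [Group G] [Finite G] : Prop :=
  ∀ χ φ : G → ℂ, IsIrrChar G χ → IsIrrChar G φ → χ ≠ φ →
    ∃ (H : Subgroup G), H.Normal ∧ ∃ l : H → ℂ, IsLinearChar H l ∧
      cdot G (ind H l) χ ≠ 0 ∧ cdot G (ind H l) φ = 0

/-- `G` is subnormally almost monomial. -/
def IsSubnormallyAlmostMonomial (G : Type*) [Group G] [Finite G] : Prop :=
  ∀ χ φ : G → ℂ, IsIrrChar G χ → IsIrrChar G φ → χ ≠ φ →
    ∃ (H : Subgroup G), IsSubnormalSubgroup G H ∧ ∃ l : H → ℂ, IsLinearChar H l ∧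
      cdot G (ind H l) χ ≠ 0 ∧ cdot G (ind H l) φ = 0

/-- `G` is quasi-monomial. -/
def IsQuasiMonomial (G : Type*) [Group G] [Finite G] : Prop :=
  ∀ χ : G → ℂ, IsIrrChar G χ → ∃ (H : Subgroup G) (l : H → ℂ) (d : ℕ),
    IsLinearChar H l ∧ 1 ≤ d ∧ ind H l = fun g => (d : ℂ) * χ g

/-- The set of irreducible characters of `G`. -/
def IrrSet (G : Type*) [Group G] [Finite G] : Set (G → ℂ) := {χ | IsIrrChar G χ}

/-- `f` belongs to the semigroup `M(G)` generated by monomial characters. -/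
def InMG (G : Type*) [Group G] [Finite G] (f : G → ℂ) : Prop :=
  ∃ (k : ℕ) (H : Fin (k + 1) → Subgroup G) (l : ∀ i, (H i) → ℂ),
    (∀ i, IsLinearChar (H i) (l i)) ∧ f = fun g => ∑ i, ind (H i) (l i) g

/-- The set of irreducible constituents of a class function `f`. -/
def Cons (G : Type*) [Group G] [Finite G] (f : G → ℂ) : Set (G → ℂ) :=
  {φ | IsIrrChar G φ ∧ cdot G φ f ≠ 0}

/-- `L_t(G)`: the number of constituent-sets of size `t` of characters in `M(G)`. -/
def Lt (G : Type*) [Group G] [Finite G] (t : ℕ) : ℕ :=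
  Nat.card {S : Set (G → ℂ) // ∃ f, InMG G f ∧ Cons G f = S ∧ Nat.card S = t}

end

/-!
Every irreducible character of `G × H` is an external product `α × β` of irreducible characters:
the regular character of `G × H` is the external product of the regular characters of the factors
and pairs with `χ` to `χ(1) ≠ 0`, so some irreducible `α × β` occurs in `χ`. Induction is
multiplicative, `(λ × μ)^(G × H) = λ^G × μ^H`. Hence if `α ≠ α'`, a linear character separating
`α` from `α'` on `G`, times the trivial character of the trivial subgroup of `H` (which induces
to the regular character), separates `α × β` from `α' × β'`; symmetrically if `β ≠ β'`.

Conversely, almost monomiality passes to a quotient `π : G → Q`. If `λ` is a linear character of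
`K ≤ G` and `χ ∘ π` occurs in `λ^G`, then `⟨λ, (χ ∘ π)|_K⟩ ≠ 0`; substituting `kg` for `g` in
this sum, with `k ∈ K ∩ ker π`, multiplies it by `λ(k)`, so `λ` is trivial on `K ∩ ker π` and
descends to `π(K)`. By Frobenius reciprocity the character it induces on `Q` pairs with `χ` and
`φ` as `λ^G` does with `χ ∘ π` and `φ ∘ π`.
-/

lemma isSimpleModule_of_finrank_end_eq_one (k : Type*) {R M : Type*} [Field k] [Ring R]
    [Algebra k R] [AddCommGroup M] [Module k M] [Module R M] [IsScalarTower k R M]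
    [IsSemisimpleModule R M] (h : Module.finrank k (Module.End R M) = 1) : IsSimpleModule R M := by
  have : Nontrivial (Module.End R M) := Module.nontrivial_of_finrank_eq_succ h
  have : Nontrivial M := by
    by_contra! hM
    exact not_subsingleton (Module.End R M) inferInstance
  rw [isSimpleModule_iff]
  refine { exists_pair_ne := exists_pair_ne _, eq_bot_or_eq_top := fun p => ?_ }
  obtain ⟨q, hpq⟩ := exists_isCompl p
  obtain ⟨c, hc⟩ : ∃ c : k, c • (1 : Module.End R M) = p.projection q hpq :=
    exists_smul_eq_of_finrank_eq_one h one_ne_zero _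
  rcases eq_or_ne c 0 with rfl | hc0
  · left
    rw [← Submodule.range_projection hpq, ← hc, zero_smul, LinearMap.range_zero]
  · right
    rw [eq_top_iff]
    intro v _
    have : c⁻¹ • p.projection q hpq v = v := by
      rw [← hc, LinearMap.smul_apply, Module.End.one_apply, inv_smul_smul₀ hc0]
    rw [← this]
    exact p.smul_of_tower_mem _ (Submodule.projection_apply_mem hpq v)

section Representation

variable {k G V : Type*} [Field k] [AddCommGroup V] [Module k V]

lemma isIrreducible_of_finrank_intertwiningMap_self_eq_one [Monoid G]
    (ρ : Representation k G V) [ρ.IsSemisimpleRepresentation]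
    (h : Module.finrank k (ρ.IntertwiningMap ρ) = 1) : ρ.IsIrreducible := by
  have := ρ.isSemisimpleRepresentation_iff_isSemisimpleModule_asModule.1 inferInstance
  rw [Representation.irreducible_iff_isSimpleModule_asModule]
  refine isSimpleModule_of_finrank_end_eq_one k ?_
  rw [← h]
  exact (Representation.IntertwiningMap.equivAlgEnd (ρ := ρ)).toLinearEquiv.finrank_eq.symm

lemma exists_ne_bot_ne_top_of_not_isIrreducible [Monoid G] [Nontrivial V]
    {ρ : Representation k G V} (hρ : ¬ρ.IsIrreducible) :
    ∃ p : Subrepresentation ρ, p ≠ ⊥ ∧ p ≠ ⊤ := by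
  have : Nontrivial (Subrepresentation ρ) :=
    ⟨⊥, ⊤, fun h => bot_ne_top (congrArg Subrepresentation.toSubmodule h)⟩
  by_contra! h
  exact hρ ⟨fun p => or_iff_not_imp_left.2 (h p)⟩

lemma isCompl_toSubmodule [Monoid G] {ρ : Representation k G V} {p q : Subrepresentation ρ}
    (hpq : IsCompl p q) : IsCompl p.toSubmodule q.toSubmodule :=
  ⟨disjoint_iff.2 (congrArg Subrepresentation.toSubmodule hpq.inf_eq_bot),
    codisjoint_iff.2 (congrArg Subrepresentation.toSubmodule hpq.sup_eq_top)⟩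

lemma character_eq_zero_of_subsingleton [Monoid G] [Subsingleton V] (ρ : Representation k G V) :
    ρ.character = 0 := by
  ext g
  rw [Representation.character, Subsingleton.elim (ρ g) 0, map_zero, Pi.zero_apply]

lemma character_eq_add_of_isCompl [Monoid G] [FiniteDimensional k V] {ρ : Representation k G V}
    {p q : Subrepresentation ρ} (hpq : IsCompl p q) :
    ρ.character = p.toRepresentation.character + q.toRepresentation.character := by
  let e : (p.toRepresentation.prod q.toRepresentation).Equiv ρ :=
    .mk (p.toSubmodule.prodEquivOfIsCompl q.toSubmodule (isCompl_toSubmodule hpq))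
      fun g => LinearMap.ext fun v => (map_add (ρ g) (v.1 : V) (v.2 : V)).symm
  rw [← Representation.char_iso e]
  ext g
  exact LinearMap.trace_prodMap' _ _

lemma character_ofMulAction {X : Type*} [Monoid G] [MulAction G X] [Finite X] (g : G) :
    (Representation.ofMulAction k G X).character g = Nat.card (MulAction.fixedBy X g) := by
  have := Fintype.ofFinite X
  rw [Representation.character, LinearMap.trace_eq_matrix_trace k (MonoidAlgebra.basis X k),
    Matrix.trace]
  have hdiag (x : X) : LinearMap.toMatrix (MonoidAlgebra.basis X k) (MonoidAlgebra.basis X k)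
      (Representation.ofMulAction k G X g) x x = if g • x = x then 1 else 0 := by
    rw [LinearMap.toMatrix_apply, MonoidAlgebra.basis_apply, Representation.ofMulAction_single]
    exact Finsupp.single_apply
  simp [hdiag, MulAction.fixedBy, Fintype.card_subtype]

open Matrix in
open scoped ComplexOrder in
lemma exists_posDef_conjTranspose_mul_mul_eq {𝕜 n : Type*} [RCLike 𝕜] [Fintype n] [DecidableEq n]
    [Group G] [Finite G] (A : G →* Matrix n n 𝕜) :
    ∃ M : Matrix n n 𝕜, M.PosDef ∧ ∀ g, (A g)ᴴ * M * A g = M := by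
  have := Fintype.ofFinite G
  refine ⟨∑ x, (A x)ᴴ * A x, ?_, fun g => ?_⟩
  · rw [← Finset.add_sum_erase _ _ (Finset.mem_univ (1 : G)), map_one]
    refine Matrix.PosDef.add_posSemidef (by simpa using Matrix.PosDef.one) ?_
    exact Matrix.posSemidef_sum _ fun x _ => Matrix.posSemidef_conjTranspose_mul_self _
  · calc (A g)ᴴ * (∑ x, (A x)ᴴ * A x) * A g = ∑ x, (A (x * g))ᴴ * A (x * g) := by
          simp only [Finset.mul_sum, Finset.sum_mul, map_mul, conjTranspose_mul, Matrix.mul_assoc]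
      _ = ∑ x, (A x)ᴴ * A x := Equiv.sum_comp (Equiv.mulRight g) fun x => (A x)ᴴ * A x

open Matrix in
open scoped ComplexOrder in
lemma trace_map_inv_eq_star {𝕜 n : Type*} [RCLike 𝕜] [Fintype n] [DecidableEq n]
    [Group G] [Finite G] (A : G →* Matrix n n 𝕜) (g : G) : (A g⁻¹).trace = star (A g).trace := by
  obtain ⟨M, hM, hinv⟩ := exists_posDef_conjTranspose_mul_mul_eq A
  have hdet : IsUnit M.det := (Matrix.isUnit_iff_isUnit_det _).1 hM.isUnit
  have hA : A g * A g⁻¹ = 1 := by rw [← map_mul, mul_inv_cancel, map_one]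
  have hconj : (A g)ᴴ = M * A g⁻¹ * M⁻¹ := by
    calc (A g)ᴴ = (A g)ᴴ * M * (A g * A g⁻¹) * M⁻¹ := by
          rw [hA, Matrix.mul_one, mul_nonsing_inv_cancel_right _ _ hdet]
      _ = M * A g⁻¹ * M⁻¹ := by rw [← Matrix.mul_assoc, hinv]
  rw [← trace_conjTranspose, hconj, trace_mul_comm, nonsing_inv_mul_cancel_left _ _ hdet]

end Representation

lemma sum_comp_of_surjective {G Q M : Type*} [Group G] [Group Q] [Fintype G] [Fintype Q]
    [AddCommMonoid M] {π : G →* Q} (hπ : Function.Surjective π) (F : Q → M) :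
    ∑ g, F (π g) = Nat.card π.ker • ∑ q, F q := by
  rw [← Finset.sum_fiberwise', Finset.smul_sum]
  refine Finset.sum_congr rfl fun q _ => ?_
  have hfiber : (Finset.univ.filter fun g => π g = q).card = Nat.card π.ker := by
    rw [← Nat.card_congr (π.fiberEquivKerOfSurjective hπ q), Nat.card_eq_fintype_card,
      Fintype.card_subtype]
    rfl
  rw [Finset.sum_const, hfiber]

/-- A class function on `G`: one that is constant on conjugacy classes. Frobenius reciprocity is
stated for these. -/
def IsClassFun {G α : Type*} [Group G] (f : G → α) : Prop :=
  ∀ x g, f (x * g * x⁻¹) = f g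

lemma IsClassFun.comp {G Q α : Type*} [Group G] [Group Q] {f : Q → α} (hf : IsClassFun f)
    (π : G →* Q) : IsClassFun (f ∘ π) := fun x g => by
  simpa using hf (π x) (π g)

/-- The external tensor product `f × h` of functions on two groups, which for characters is the
character of the external tensor product of the underlying representations. -/
def extProd {G H : Type*} (f : G → ℂ) (h : H → ℂ) : G × H → ℂ :=
  fun x => f x.1 * h x.2

section extProd

variable {G H : Type*}

lemma zero_extProd (h : H → ℂ) : extProd (0 : G → ℂ) h = 0 := by
  ext; simp [extProd]

lemma extProd_zero (f : G → ℂ) : extProd f (0 : H → ℂ) = 0 := by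
  ext; simp [extProd]

lemma add_extProd (f f' : G → ℂ) (h : H → ℂ) :
    extProd (f + f') h = extProd f h + extProd f' h := by
  ext; simp [extProd, add_mul]

lemma extProd_add (f : G → ℂ) (h h' : H → ℂ) :
    extProd f (h + h') = extProd f h + extProd f h' := by
  ext; simp [extProd, mul_add]

end extProd

section cdot

variable {G H : Type*} [Group G] [Finite G] [Group H] [Finite H]

lemma cdot_eq_sum [Fintype G] (f h : G → ℂ) :
    cdot G f h = (Nat.card G : ℂ)⁻¹ * ∑ g : G, f g * (starRingEnd ℂ) (h g) := by
  rw [cdot, finsum_eq_sum_of_fintype]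

lemma cdot_zero_right (f : G → ℂ) : cdot G f 0 = 0 := by
  simp [cdot]

lemma cdot_add_right (f h k : G → ℂ) : cdot G f (h + k) = cdot G f h + cdot G f k := by
  have := Fintype.ofFinite G
  simp only [cdot_eq_sum, Pi.add_apply, map_add, mul_add, Finset.sum_add_distrib]

lemma cdot_extProd (f f' : G → ℂ) (h h' : H → ℂ) :
    cdot (G × H) (extProd f h) (extProd f' h') = cdot G f f' * cdot H h h' := by
  have := Fintype.ofFinite G
  have := Fintype.ofFinite H
  simp only [cdot_eq_sum, extProd, map_mul, mul_mul_mul_comm _ (h _), ← Fintype.sum_mul_sum,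
    Fintype.sum_prod_type, Nat.card_prod, Nat.cast_mul, mul_inv]
  ring

lemma cdot_comp_of_surjective {Q : Type*} [Group Q] [Finite Q] {π : G →* Q}
    (hπ : Function.Surjective π) (f h : Q → ℂ) :
    cdot G (f ∘ π) (h ∘ π) = cdot Q f h := by
  have := Fintype.ofFinite G
  have := Fintype.ofFinite Q
  have hcard : Nat.card G = Nat.card π.ker * Nat.card Q := by
    simpa using sum_comp_of_surjective hπ fun _ => (1 : ℕ)
  have hker : (Nat.card π.ker : ℂ) ≠ 0 := Nat.cast_ne_zero.2 Nat.card_pos.ne'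
  simp only [cdot_eq_sum, Function.comp_apply]
  rw [sum_comp_of_surjective hπ fun q => f q * (starRingEnd ℂ) (h q), hcard, nsmul_eq_mul]
  push_cast
  field_simp

lemma ker_le_ker_of_cdot_comp_ne_zero {Q : Type*} [Group Q] {π : G →* Q} {l : G →* ℂˣ}
    {f : Q → ℂ} (h : cdot G (fun g => l g) (f ∘ π) ≠ 0) : π.ker ≤ l.ker := by
  intro k hk
  have := Fintype.ofFinite G
  set S := ∑ g, (l g : ℂ) * (starRingEnd ℂ) (f (π g)) with hS
  have hS0 : S ≠ 0 := by
    rw [cdot_eq_sum] at h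
    exact right_ne_zero_of_mul h
  have htranslate : l k * S = S := by
    calc l k * S = ∑ g, (l (k * g) : ℂ) * (starRingEnd ℂ) (f (π (k * g))) := by
          simp only [hS, Finset.mul_sum, map_mul, MonoidHom.mem_ker.1 hk, one_mul, Units.val_mul,
            mul_assoc]
      _ = S := Equiv.sum_comp (Equiv.mulLeft k) fun g => (l g : ℂ) * (starRingEnd ℂ) (f (π g))
  exact Units.ext (mul_right_cancel₀ hS0 (htranslate.trans (one_mul S).symm))

end cdot

section ind

variable {G H Q : Type*} [Group G] [Finite G] [Group H] [Finite H] [Group Q] [Finite Q]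

lemma ind_apply_eq_sum [Fintype G] (K : Subgroup G) (l : K → ℂ) (g : G) :
    ind K l g = (Nat.card K : ℂ)⁻¹ *
      ∑ x : G, if h : x * g * x⁻¹ ∈ K then l ⟨x * g * x⁻¹, h⟩ else 0 := by
  rw [ind, finsum_eq_sum_of_fintype]

lemma cdot_ind_eq_cdot_res (K : Subgroup G) (l : K → ℂ) {χ : G → ℂ} (hχ : IsClassFun χ) :
    cdot G (ind K l) χ = cdot K l (res K χ) := by
  have := Fintype.ofFinite G
  have hG : (Nat.card G : ℂ) ≠ 0 := Nat.cast_ne_zero.2 Nat.card_pos.ne'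
  let l₀ : G → ℂ := fun g => if h : g ∈ K then l ⟨g, h⟩ else 0
  have hconj (x : G) : ∑ g, l₀ (x * g * x⁻¹) * (starRingEnd ℂ) (χ g) =
      ∑ g, l₀ g * (starRingEnd ℂ) (χ g) := by
    rw [← Equiv.sum_comp (MulAut.conj x).toEquiv fun g => l₀ g * (starRingEnd ℂ) (χ g)]
    simp [hχ x _]
  have hextend : ∑ g, l₀ g * (starRingEnd ℂ) (χ g) =
      ∑ k : K, l k * (starRingEnd ℂ) (res K χ k) := by
    rw [← Fintype.sum_subtype_add_sum_subtype (· ∈ K),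
      Fintype.sum_eq_zero _ fun x : {x // x ∉ K} => by simp [l₀, x.2], add_zero]
    refine Finset.sum_congr (by congr!) fun x _ => ?_
    simp [l₀, res]
  calc cdot G (ind K l) χ = (Nat.card G : ℂ)⁻¹ * ((Nat.card K : ℂ)⁻¹ *
        ∑ x : G, ∑ g : G, l₀ (x * g * x⁻¹) * (starRingEnd ℂ) (χ g)) := by
        rw [Finset.sum_comm]
        simp only [cdot_eq_sum, ind_apply_eq_sum, mul_assoc, Finset.sum_mul, ← Finset.mul_sum, l₀]
    _ = (Nat.card G : ℂ)⁻¹ * ((Nat.card K : ℂ)⁻¹ *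
        (Nat.card G * ∑ k : K, l k * (starRingEnd ℂ) (res K χ k))) := by
        simp only [hconj, hextend, Finset.sum_const, Finset.card_univ, Nat.card_eq_fintype_card,
          nsmul_eq_mul]
    _ = cdot K l (res K χ) := by
        rw [cdot_eq_sum]
        field_simp

lemma ind_prod (K : Subgroup G) (L : Subgroup H) (l : K → ℂ) (m : L → ℂ) :
    ind (K.prod L) (extProd l m ∘ K.prodEquiv L) = extProd (ind K l) (ind L m) := by
  have := Fintype.ofFinite G
  have := Fintype.ofFinite H
  have hcard : (Nat.card (K.prod L) : ℂ) = Nat.card K * Nat.card L := by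
    rw [Nat.card_congr (K.prodEquiv L).toEquiv, Nat.card_prod, Nat.cast_mul]
  ext ⟨g, h⟩
  simp only [extProd, ind_apply_eq_sum, hcard, mul_inv]
  rw [mul_mul_mul_comm, Fintype.sum_mul_sum, Fintype.sum_prod_type]
  congr! 5 with x _ y _
  by_cases hx : x * g * x⁻¹ ∈ K
  · by_cases hy : y * h * y⁻¹ ∈ L
    · rw [dif_pos hx, dif_pos hy]
      exact dif_pos (Subgroup.mem_prod.2 ⟨hx, hy⟩)
    · simp [hy, Subgroup.mem_prod]
  · simp [hx, Subgroup.mem_prod]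

lemma cdot_ind_map (π : G →* Q) (K : Subgroup G) (m : K.map π → ℂ) {χ : Q → ℂ}
    (hχ : IsClassFun χ) :
    cdot Q (ind (K.map π) m) χ = cdot G (ind K (m ∘ π.subgroupMap K)) (χ ∘ π) := by
  rw [cdot_ind_eq_cdot_res _ _ hχ, cdot_ind_eq_cdot_res _ _ (hχ.comp π),
    ← cdot_comp_of_surjective (π.subgroupMap_surjective K)]
  rfl

end ind

namespace IsLinearChar

variable {G H : Type*} [Group G] [Group H]

lemma comp {l : H → ℂ} (hl : IsLinearChar H l) (π : G →* H) : IsLinearChar G (l ∘ π) := by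
  obtain ⟨ρ, rfl⟩ := hl
  exact ⟨ρ.comp π, rfl⟩

lemma extProd {l : G → ℂ} {m : H → ℂ} (hl : IsLinearChar G l) (hm : IsLinearChar H m) :
    IsLinearChar (G × H) (extProd l m) := by
  obtain ⟨ρ, rfl⟩ := hl
  obtain ⟨σ, rfl⟩ := hm
  exact ⟨ρ.coprod σ, by ext; simp [_root_.extProd]⟩

end IsLinearChar

section IsChar

variable {G Q V W : Type*} [Group G] [AddCommGroup V] [Module ℂ V] [FiniteDimensional ℂ V]
  [AddCommGroup W] [Module ℂ W] [FiniteDimensional ℂ W]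

lemma isChar_character (ρ : Representation ℂ G V) : IsChar G ρ.character := by
  let b := Module.finBasis ℂ V
  refine ⟨_, (Units.map (LinearMap.toMatrixAlgEquiv b).toMonoidHom).comp ρ.toHomUnits, ?_⟩
  ext g
  exact LinearMap.trace_eq_matrix_trace ℂ b (ρ g)

namespace IsChar

lemma exists_representation {f : G → ℂ} (hf : IsChar G f) :
    ∃ (n : ℕ) (ρ : Representation ℂ G (Fin n → ℂ)), ρ.character = f := by
  obtain ⟨n, ρ, rfl⟩ := hf
  refine ⟨n, (Matrix.toLinAlgEquiv' : Matrix (Fin n) (Fin n) ℂ ≃ₐ[ℂ] _).toMonoidHom.comp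
    ((Units.coeHom _).comp ρ), ?_⟩
  ext g
  exact Matrix.trace_toLin'_eq _

lemma isClassFun {f : G → ℂ} (hf : IsChar G f) : IsClassFun f := by
  obtain ⟨n, ρ, rfl⟩ := hf.exists_representation
  exact fun x g => ρ.char_conj g x

lemma map_inv [Finite G] {f : G → ℂ} (hf : IsChar G f) (g : G) :
    f g⁻¹ = (starRingEnd ℂ) (f g) := by
  obtain ⟨n, ρ, rfl⟩ := hf
  exact trace_map_inv_eq_star ((Units.coeHom _).comp ρ) g

lemma comp [Group Q] {f : Q → ℂ} (hf : IsChar Q f) (π : G →* Q) : IsChar G (f ∘ π) := by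
  obtain ⟨n, ρ, rfl⟩ := hf
  exact ⟨n, ρ.comp π, rfl⟩

lemma mul {f h : G → ℂ} (hf : IsChar G f) (hh : IsChar G h) : IsChar G (f * h) := by
  obtain ⟨n, ρ, rfl⟩ := hf.exists_representation
  obtain ⟨m, σ, rfl⟩ := hh.exists_representation
  rw [← Representation.char_tensor]
  exact isChar_character _

lemma extProd {H : Type*} [Group H] {f : G → ℂ} {h : H → ℂ} (hf : IsChar G f)
    (hh : IsChar H h) : IsChar (G × H) (extProd f h) :=
  (hf.comp (MonoidHom.fst G H)).mul (hh.comp (MonoidHom.snd G H))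

lemma eq_zero_of_apply_one_eq_zero {f : G → ℂ} (hf : IsChar G f) (h : f 1 = 0) : f = 0 := by
  obtain ⟨n, ρ, rfl⟩ := hf
  obtain rfl : n = 0 := by simpa using h
  ext g
  exact Matrix.trace_fin_zero _

end IsChar

lemma cdot_character [Finite G] (ρ : Representation ℂ G V) (σ : Representation ℂ G W) :
    cdot G σ.character ρ.character = Module.finrank ℂ (ρ.IntertwiningMap σ) := by
  have := Fintype.ofFinite G
  have : Invertible (Nat.card G : ℂ) := invertibleOfNonzero (Nat.cast_ne_zero.2 Nat.card_pos.ne')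
  rw [← Representation.card_inv_mul_sum_char_mul_char_eq_finrank, cdot_eq_sum]
  simp only [(isChar_character ρ).map_inv]

end IsChar

section IsIrrChar

variable {G H Q V : Type*} [Group G] [Finite G] [Group H] [Finite H] [Group Q] [Finite Q]
  [AddCommGroup V] [Module ℂ V] [FiniteDimensional ℂ V]

lemma isIrrChar_character_iff (ρ : Representation ℂ G V) :
    IsIrrChar G ρ.character ↔ ρ.IsIrreducible := by
  have : NeZero (Nat.card G : ℂ) := ⟨Nat.cast_ne_zero.2 Nat.card_pos.ne'⟩
  rw [IsIrrChar, and_iff_right (isChar_character ρ), cdot_character, Nat.cast_eq_one]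
  exact ⟨isIrreducible_of_finrank_intertwiningMap_self_eq_one ρ, fun _ =>
    Representation.IsIrreducible.finrank_intertwiningMap_self ρ⟩

lemma character_mem_closure_irrSet (ρ : Representation ℂ G V) :
    ρ.character ∈ AddSubmonoid.closure (IrrSet G) := by
  induction hn : Module.finrank ℂ V using Nat.strong_induction_on generalizing V with
  | _ n ih =>
    subst hn
    have : NeZero (Nat.card G : ℂ) := ⟨Nat.cast_ne_zero.2 Nat.card_pos.ne'⟩
    rcases subsingleton_or_nontrivial V with hV | hV
    · rw [character_eq_zero_of_subsingleton]
      exact zero_mem _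
    by_cases hρ : ρ.IsIrreducible
    · exact AddSubmonoid.subset_closure ((isIrrChar_character_iff ρ).2 hρ)
    obtain ⟨p, hp_bot, hp_top⟩ := exists_ne_bot_ne_top_of_not_isIrreducible hρ
    obtain ⟨q, hpq⟩ := exists_isCompl p
    have hq_top : q ≠ ⊤ := fun h => hp_bot (eq_bot_of_isCompl_top (h ▸ hpq))
    have hlt (r : Subrepresentation ρ) (hr : r ≠ ⊤) :
        Module.finrank ℂ r.toSubmodule < Module.finrank ℂ V :=
      Submodule.finrank_lt fun h => hr (Subrepresentation.toSubmodule_injective h)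
    rw [character_eq_add_of_isCompl hpq]
    exact add_mem (ih _ (hlt p hp_top) p.toRepresentation rfl)
      (ih _ (hlt q hq_top) q.toRepresentation rfl)

namespace IsIrrChar

lemma ne_zero {f : G → ℂ} (hf : IsIrrChar G f) : f ≠ 0 := by
  rintro rfl
  simpa [cdot_zero_right] using hf.2

lemma apply_one_ne_zero {f : G → ℂ} (hf : IsIrrChar G f) : f 1 ≠ 0 :=
  mt hf.1.eq_zero_of_apply_one_eq_zero hf.ne_zero

lemma eq_of_cdot_ne_zero {f h : G → ℂ} (hf : IsIrrChar G f) (hh : IsIrrChar G h)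
    (hfh : cdot G f h ≠ 0) : f = h := by
  obtain ⟨n, ρ, rfl⟩ := hf.1.exists_representation
  obtain ⟨m, σ, rfl⟩ := hh.1.exists_representation
  have := (isIrrChar_character_iff ρ).1 hf
  have := (isIrrChar_character_iff σ).1 hh
  by_contra hne
  have : IsEmpty (σ.Equiv ρ) := ⟨fun e => hne (Representation.char_iso e).symm⟩
  exact hfh (by rw [cdot_character, Module.finrank_zero_of_subsingleton, Nat.cast_zero])

lemma extProd {f : G → ℂ} {h : H → ℂ} (hf : IsIrrChar G f) (hh : IsIrrChar H h) :
    IsIrrChar (G × H) (extProd f h) :=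
  ⟨hf.1.extProd hh.1, by rw [cdot_extProd, hf.2, hh.2, one_mul]⟩

lemma comp {f : Q → ℂ} (hf : IsIrrChar Q f) {π : G →* Q} (hπ : Function.Surjective π) :
    IsIrrChar G (f ∘ π) :=
  ⟨hf.1.comp π, by rw [cdot_comp_of_surjective hπ, hf.2]⟩

end IsIrrChar

/-- The character of the regular representation of `G`, used to show that irreducible characters
of a product are external products. -/
noncomputable def regChar (G : Type*) [Group G] : G → ℂ :=
  (Representation.ofMulAction ℂ G G).character

lemma regChar_apply (g : G) : regChar G g = if g = 1 then (Nat.card G : ℂ) else 0 := by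
  rw [regChar, character_ofMulAction]
  split_ifs with h <;> simp [MulAction.fixedBy, h]

lemma extProd_regChar : extProd (regChar G) (regChar H) = regChar (G × H) := by
  ext ⟨g, h⟩
  by_cases hg : g = 1 <;> by_cases hh : h = 1 <;> simp [extProd, regChar_apply, hg, hh]

lemma cdot_regChar (f : G → ℂ) : cdot G f (regChar G) = f 1 := by
  have := Fintype.ofFinite G
  have hG : (Nat.card G : ℂ) ≠ 0 := Nat.cast_ne_zero.2 Nat.card_pos.ne'
  rw [cdot_eq_sum, Fintype.sum_eq_single 1 fun g hg => by simp [regChar_apply, hg]]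
  rw [regChar_apply, if_pos rfl, map_natCast, mul_left_comm, inv_mul_cancel₀ hG, mul_one]

lemma exists_isIrrChar_cdot_extProd_ne_zero {f : G × H → ℂ} (hf : f 1 ≠ 0) :
    ∃ (α : G → ℂ) (β : H → ℂ), IsIrrChar G α ∧ IsIrrChar H β ∧
      cdot (G × H) f (extProd α β) ≠ 0 := by
  by_contra! hirr
  have hclosure {α : G → ℂ} {β : H → ℂ} (hα : α ∈ AddSubmonoid.closure (IrrSet G))
      (hβ : β ∈ AddSubmonoid.closure (IrrSet H)) : cdot (G × H) f (extProd α β) = 0 := by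
    induction hα using AddSubmonoid.closure_induction with
    | zero => rw [zero_extProd, cdot_zero_right]
    | add α α' _ _ h h' => rw [add_extProd, cdot_add_right, h, h', add_zero]
    | mem α hα =>
      induction hβ using AddSubmonoid.closure_induction with
      | zero => rw [extProd_zero, cdot_zero_right]
      | add β β' _ _ h h' => rw [extProd_add, cdot_add_right, h, h', add_zero]
      | mem β hβ => exact hirr α β hα hβ
  have hreg : cdot (G × H) f (extProd (regChar G) (regChar H)) = 0 :=
    hclosure (character_mem_closure_irrSet _) (character_mem_closure_irrSet _)
  rw [extProd_regChar, cdot_regChar] at hreg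
  exact hf hreg

lemma IsIrrChar.exists_eq_extProd {χ : G × H → ℂ} (hχ : IsIrrChar (G × H) χ) :
    ∃ (α : G → ℂ) (β : H → ℂ), IsIrrChar G α ∧ IsIrrChar H β ∧ χ = _root_.extProd α β := by
  obtain ⟨α, β, hα, hβ, hne⟩ := exists_isIrrChar_cdot_extProd_ne_zero hχ.apply_one_ne_zero
  exact ⟨α, β, hα, hβ, hχ.eq_of_cdot_ne_zero (hα.extProd hβ) hne⟩

lemma IsIrrChar.exists_cdot_ind_ne_zero {χ : G → ℂ} (hχ : IsIrrChar G χ) :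
    ∃ (K : Subgroup G) (l : K → ℂ), IsLinearChar K l ∧ cdot G (ind K l) χ ≠ 0 := by
  refine ⟨⊥, fun _ => 1, ⟨1, rfl⟩, ?_⟩
  rw [cdot_ind_eq_cdot_res _ _ hχ.1.isClassFun, cdot_eq_sum]
  have hdefault : ((default : (⊥ : Subgroup G)) : G) = 1 := rfl
  simp [res, hdefault, hχ.apply_one_ne_zero]

end IsIrrChar

namespace IsAlmostMonomial

variable {G H Q : Type*} [Group G] [Finite G] [Group H] [Finite H] [Group Q] [Finite Q]

lemma prod (hG : IsAlmostMonomial G) (hH : IsAlmostMonomial H) : IsAlmostMonomial (G × H) := by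
  intro χ φ hχ hφ hne
  obtain ⟨α, β, hα, hβ, rfl⟩ := hχ.exists_eq_extProd
  obtain ⟨α', β', hα', hβ', rfl⟩ := hφ.exists_eq_extProd
  suffices ∃ (K : Subgroup G) (l : K → ℂ) (L : Subgroup H) (m : L → ℂ),
      IsLinearChar K l ∧ IsLinearChar L m ∧
      (cdot G (ind K l) α ≠ 0 ∧ cdot H (ind L m) β ≠ 0) ∧
      (cdot G (ind K l) α' = 0 ∨ cdot H (ind L m) β' = 0) by
    obtain ⟨K, l, L, m, hl, hm, hne_zero, hzero⟩ := this
    refine ⟨K.prod L, extProd l m ∘ K.prodEquiv L,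
      (hl.extProd hm).comp (K.prodEquiv L).toMonoidHom, ?_⟩
    rw [ind_prod, cdot_extProd, cdot_extProd]
    exact ⟨mul_ne_zero hne_zero.1 hne_zero.2, mul_eq_zero.2 hzero⟩
  by_cases hαα' : α = α'
  · have hββ' : β ≠ β' := fun hββ' => hne (by rw [hαα', hββ'])
    obtain ⟨K, l, hl, hlα⟩ := hα.exists_cdot_ind_ne_zero
    obtain ⟨L, m, hm, hmβ, hmβ'⟩ := hH β β' hβ hβ' hββ'
    exact ⟨K, l, L, m, hl, hm, ⟨hlα, hmβ⟩, .inr hmβ'⟩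
  · obtain ⟨K, l, hl, hlα, hlα'⟩ := hG α α' hα hα' hαα'
    obtain ⟨L, m, hm, hmβ⟩ := hβ.exists_cdot_ind_ne_zero
    exact ⟨K, l, L, m, hl, hm, ⟨hlα, hmβ⟩, .inl hlα'⟩

lemma of_surjective (hG : IsAlmostMonomial G) {π : G →* Q} (hπ : Function.Surjective π) :
    IsAlmostMonomial Q := by
  intro χ φ hχ hφ hne
  obtain ⟨K, _, ⟨l, rfl⟩, hlχ, hlφ⟩ :=
    hG _ _ (hχ.comp hπ) (hφ.comp hπ) (hπ.injective_comp_right.ne hne)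
  let πK : K →* K.map π := π.subgroupMap K
  have hker : πK.ker ≤ l.ker := by
    apply ker_le_ker_of_cdot_comp_ne_zero (f := res (K.map π) χ)
    rwa [cdot_ind_eq_cdot_res _ _ (hχ.1.comp π).isClassFun] at hlχ
  obtain ⟨m, hm⟩ : ∃ m : K.map π →* ℂˣ, m.comp πK = l :=
    ⟨πK.liftOfSurjective (π.subgroupMap_surjective K) ⟨l, hker⟩, πK.liftOfRightInverse_comp _ _ _⟩
  refine ⟨K.map π, fun x => m x, ⟨m, rfl⟩, ?_⟩
  rw [cdot_ind_map _ _ _ hχ.1.isClassFun, cdot_ind_map _ _ _ hφ.1.isClassFun]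
  subst hm
  exact ⟨hlχ, hlφ⟩

end IsAlmostMonomial

theorem stmt11 (G₁ G₂ : Type*) [Group G₁] [Finite G₁] [Group G₂] [Finite G₂] :
    (IsAlmostMonomial G₁ ∧ IsAlmostMonomial G₂) ↔ IsAlmostMonomial (G₁ × G₂) := by
  refine ⟨fun ⟨h₁, h₂⟩ => h₁.prod h₂, fun h => ⟨?_, ?_⟩⟩
  · exact h.of_surjective (π := MonoidHom.fst G₁ G₂) Prod.fst_surjective
  · exact h.of_surjective (π := MonoidHom.snd G₁ G₂) Prod.snd_surjective
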